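/- arXiv:1801.10394 — 2 statements merged into one kernel-verified Lean document; each statement's English description precedes it below -/
import Mathlib

section
/- The bilinear form B of the geometric representation of a Coxeter system (W,S) is positive definite if and only if W is finite. -/
open Real

/-!
If `w` lengthens on right multiplication by `sᵢ`, it sends the simple root `αᵢ` to a nonnegative
combination of simple roots, and otherwise to a nonpositive one; hence the translates of the
chamber `{x | B(αᵢ, x) > 0 for all i}` by distinct group elements are disjoint. When `B` is positive
definite the chamber contains a unit ball, so the orbit of its centre is a bounded,
uniformly separated subset of a Euclidean space, and the group is finite.

Conversely, a finite group preserves an inner product obtained by averaging. The simple reflections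
are orthogonal for it, so `⟪αᵢ, αⱼ⟫ = B(αᵢ, αⱼ) ‖αᵢ‖²`; as `B` is symmetric, it is the Gram matrix
of the normalised simple roots.
-/

section Chebyshev

open Polynomial.Chebyshev

lemma S_eval_two_mul_cos_nonneg {θ : ℝ} (hθ : 0 < θ) (hθπ : θ < π) {k : ℤ} (hk : 0 ≤ k + 1)
    (hkθ : (k + 1) * θ ≤ π) : 0 ≤ (S ℝ k).eval (2 * cos θ) := by
  have hk' : (0 : ℝ) ≤ k + 1 := by exact_mod_cast hk
  refine nonneg_of_mul_nonneg_left ?_ (sin_pos_of_pos_of_lt_pi hθ hθπ)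
  rw [S_two_mul_real_cos]
  exact sin_nonneg_of_nonneg_of_le_pi (by positivity) hkθ

end Chebyshev

section FinsuppBilin

variable {ι R : Type*} [CommRing R]

/-- The bilinear form on finitely supported vectors whose Gram matrix on the standard basis
is `A`. Unlike `Matrix.toBilin'`, it does not require the index type to be finite. -/
noncomputable def finsuppBilin (A : Matrix ι ι R) : LinearMap.BilinForm R (ι →₀ R) :=
  Finsupp.linearCombination R fun i ↦ Finsupp.linearCombination R (A i)

lemma finsuppBilin_single (A : Matrix ι ι R) (i j : ι) :
    finsuppBilin A (.single i 1) (.single j 1) = A i j := by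
  simp [finsuppBilin]

lemma finsuppBilin_apply (A : Matrix ι ι R) (x y : ι →₀ R) :
    finsuppBilin A x y = x.sum fun i a ↦ y.sum fun j b ↦ a * A i j * b := by
  simp only [finsuppBilin, Finsupp.linearCombination_apply, Finsupp.sum, LinearMap.sum_apply,
    LinearMap.smul_apply, smul_eq_mul, Finset.mul_sum]
  exact Finset.sum_congr rfl fun i _ ↦ Finset.sum_congr rfl fun j _ ↦ by ring

lemma isSymm_finsuppBilin {A : Matrix ι ι R} (hA : A.IsSymm) : (finsuppBilin A).IsSymm where
  eq x y := by
    simp only [finsuppBilin_apply]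
    rw [Finsupp.sum_comm]
    refine Finsupp.sum_congr fun j _ ↦ Finsupp.sum_congr fun i _ ↦ ?_
    rw [hA.apply]
    ring

lemma finsuppBilin_self_pos {A : Matrix ι ι ℝ} (hA : A.PosDef) {x : ι →₀ ℝ} (hx : x ≠ 0) :
    0 < finsuppBilin A x x := by
  simpa only [finsuppBilin_apply, star_trivial] using hA.2 hx

lemma finsuppBilin_nonneg [PartialOrder R] [IsOrderedRing R] {A : Matrix ι ι R} {x y : ι →₀ R}
    (hx : 0 ≤ x) (hy : ∀ i, 0 ≤ finsuppBilin A (.single i 1) y) : 0 ≤ finsuppBilin A x y := by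
  have hsum : finsuppBilin A x y = x.sum fun i a ↦ a * finsuppBilin A (.single i 1) y := by
    simp only [finsuppBilin, Finsupp.linearCombination_single, one_smul]
    rw [Finsupp.linearCombination_apply, Finsupp.sum, LinearMap.sum_apply]
    rfl
  rw [hsum]
  exact Finsupp.sum_nonneg fun i _ ↦ mul_nonneg (hx i) (hy i)

/-- The inner product on finitely supported vectors defined by a positive definite matrix. -/
@[reducible] noncomputable def finsuppInnerCore {A : Matrix ι ι ℝ} (hA : A.PosDef) :
    InnerProductSpace.Core ℝ (ι →₀ ℝ) where
  inner x y := finsuppBilin A x y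
  conj_inner_symm x y := (isSymm_finsuppBilin hA.isHermitian).eq y x
  re_inner_nonneg x := by
    obtain rfl | hx := eq_or_ne x 0
    · simp
    · exact (finsuppBilin_self_pos hA hx).le
  add_left x y z := by simp
  smul_left x y r := by simp
  definite x hx := by_contra fun h ↦ (finsuppBilin_self_pos hA h).ne' hx

end FinsuppBilin

section InnerProductSpace

open scoped RealInnerProductSpace

variable {ι V E : Type*} [AddCommGroup V] [Module ℝ V] [NormedAddCommGroup E]
  [InnerProductSpace ℝ E]

lemma posDef_of_inner_eq_mul_norm_sq [Finite ι] {A : Matrix ι ι ℝ} (hA : A.IsSymm) {u : ι → E}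
    (hu : LinearIndependent ℝ u) (h : ∀ i j, ⟪u i, u j⟫ = A i j * ‖u i‖ ^ 2) : A.PosDef := by
  have hu0 (i : ι) : ‖u i‖ ≠ 0 := norm_ne_zero_iff.mpr (hu.ne_zero i)
  have hA_eq : A = Matrix.gram ℝ fun i ↦ ‖u i‖⁻¹ • u i := by
    ext i j
    rw [Matrix.gram_apply, real_inner_smul_left, real_inner_smul_right, h]
    have hsymm : A i j * ‖u i‖ ^ 2 = A i j * ‖u j‖ ^ 2 := by
      rw [← h, real_inner_comm, h, hA.apply]
    obtain h0 | hnorm := mul_eq_mul_left_iff.mp hsymm |>.symm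
    · simp [h0]
    · rw [← sq_eq_sq₀ (norm_nonneg _) (norm_nonneg _) |>.mp hnorm]
      field_simp [hu0 i]
  rw [hA_eq]
  exact Matrix.posDef_gram_of_linearIndependent <|
    hu.units_smul fun i ↦ (Units.mk0 _ (hu0 i))⁻¹

lemma two_mul_inner_map_eq_of_reflection_invariant {x : V} {f : Module.Dual ℝ V} (hf : f x = 2)
    (J : V →ₗ[ℝ] E)
    (hJ : ∀ y z, ⟪J (Module.reflection hf y), J (Module.reflection hf z)⟫ = ⟪J y, J z⟫) (y : V) :
    2 * ⟪J x, J y⟫ = f y * ‖J x‖ ^ 2 := by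
  have h := hJ x y
  rw [Module.reflection_apply_self, Module.reflection_apply, map_neg, map_sub, map_smul,
    inner_neg_left, inner_sub_right, real_inner_smul_right, real_inner_self_eq_norm_sq] at h
  linarith

variable {G : Type*} [Group G]

/-- The map sending a vector `x` to the family of images `L (ρ g x)` of its orbit, so that
pulling the inner product back along it sums `⟪L (ρ g x), L (ρ g y)⟫` over the group. -/
noncomputable def orbitMap (ρ : Representation ℝ G V) (L : V →ₗ[ℝ] E) :
    V →ₗ[ℝ] PiLp 2 fun _ : G ↦ E :=
  (WithLp.linearEquiv 2 ℝ (G → E)).symm.toLinearMap ∘ₗ LinearMap.pi fun g ↦ L ∘ₗ ρ g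

lemma orbitMap_apply (ρ : Representation ℝ G V) (L : V →ₗ[ℝ] E) (x : V) (g : G) :
    orbitMap ρ L x g = L (ρ g x) := rfl

lemma orbitMap_injective (ρ : Representation ℝ G V) {L : V →ₗ[ℝ] E}
    (hL : Function.Injective L) : Function.Injective (orbitMap ρ L) := fun x y h ↦ hL <| by
  simpa [orbitMap_apply] using congr($h 1)

lemma inner_orbitMap_map [Fintype G] (ρ : Representation ℝ G V) (L : V →ₗ[ℝ] E) (g : G) (x y : V) :
    ⟪orbitMap ρ L (ρ g x), orbitMap ρ L (ρ g y)⟫ = ⟪orbitMap ρ L x, orbitMap ρ L y⟫ := by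
  simp only [PiLp.inner_apply, orbitMap_apply, ← Module.End.mul_apply, ← map_mul]
  exact Fintype.sum_equiv (Equiv.mulRight g) _ _ fun _ ↦ rfl

end InnerProductSpace

lemma finite_of_isBounded_range_of_pairwise_le_dist {α X : Type*} [MetricSpace X] [ProperSpace X]
    {f : α → X} {ε : ℝ} (hε : 0 < ε) (hbdd : Bornology.IsBounded (Set.range f))
    (hsep : Pairwise fun a b ↦ ε ≤ dist (f a) (f b)) : Finite α := by
  let _ : TopologicalSpace α := ⊥
  have _ : DiscreteTopology α := ⟨rfl⟩
  have hf := Metric.isClosedEmbedding_of_pairwise_le_dist hε hsep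
  have hcompact : IsCompact (Set.range f) :=
    Metric.isCompact_of_isClosed_isBounded hf.isClosed_range hbdd
  have _ : CompactSpace α := ⟨hf.isCompact_iff.mpr (by rwa [Set.image_univ])⟩
  exact finite_of_compact_of_discrete

section Descents

open CoxeterSystem

variable {ι W : Type*} [Group W] {M : CoxeterMatrix ι} (cs : CoxeterSystem M W)

-- The factor `v` is the minimal representative of the coset of `w` modulo `⟨sᵢ, sⱼ⟩`.
lemma exists_eq_mul_alternatingWord {w : W} {i : ι} (j : ι) (hw : ¬cs.IsRightDescent w i) :
    ∃ v k, w = v * cs.wordProd (alternatingWord i j k) ∧ cs.length v + k = cs.length w ∧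
      ¬cs.IsRightDescent v i ∧ ¬cs.IsRightDescent v j := by
  by_cases hj : cs.IsRightDescent w j
  · obtain ⟨v, k, hv, hlen, hvj, hvi⟩ := exists_eq_mul_alternatingWord i
      (cs.isRightDescent_iff_not_isRightDescent_mul.mp hj)
    refine ⟨v, k + 1, ?_, ?_, hvi, hvj⟩
    · rw [alternatingWord_succ, cs.wordProd_concat, ← mul_assoc, ← hv,
        cs.simple_mul_simple_cancel_right]
    · have := cs.isRightDescent_iff.mp hj
      lia
  · exact ⟨w, 0, by simp [alternatingWord], rfl, hw, hj⟩
termination_by cs.length w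
decreasing_by exact hj

lemma lt_of_not_isRightDescent_of_eq_mul_alternatingWord {v w : W} {i j : ι} {k : ℕ}
    (hw : ¬cs.IsRightDescent w i) (hv : w = v * cs.wordProd (alternatingWord i j k))
    (hlen : cs.length v + k = cs.length w) (hM : M i j ≠ 0) : k < M i j := by
  by_contra! hk
  have hred : cs.length (cs.wordProd (alternatingWord j i (k + 1))) < k + 1 := by
    refine lt_of_le_of_ne ?_ ?_
    · simpa using cs.length_wordProd_le (alternatingWord j i (k + 1))
    · simpa [CoxeterSystem.IsReduced] using
        cs.not_isReduced_alternatingWord j i (M.symmetric i j ▸ hM) (m := k + 1)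
          (by rw [M.symmetric]; lia)
  have hlen' : cs.length (w * cs.simple i) = cs.length w + 1 := cs.not_isRightDescent_iff.mp hw
  have := cs.length_mul_le v (cs.wordProd (alternatingWord j i (k + 1)))
  rw [alternatingWord_succ, cs.wordProd_concat] at this hred
  rw [hv, mul_assoc] at hlen'
  lia

end Descents

section Dihedral

open Polynomial.Chebyshev

variable {V : Type*} [AddCommGroup V] [Module ℝ V] {x y : V} {f g : Module.Dual ℝ V}

lemma reflection_mul_reflection_sq_eq_one (hf : f x = 2) (hg : g y = 2) (hfy : f y = 0)
    (hgx : g x = 0) : (Module.reflection hf * Module.reflection hg) ^ 2 = 1 := by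
  ext z
  simp only [pow_two, LinearEquiv.mul_apply, Module.reflection_apply, map_sub, map_smul, hf, hg,
    hfy, hgx, LinearEquiv.coe_one, id_eq]
  module

lemma reflection_mul_reflection_pow_eq_one (hf : f x = 2) (hg : g y = 2) {m : ℕ} (hm : 3 ≤ m)
    (h : f y * g x - 2 = 2 * cos (2 * π / m)) :
    (Module.reflection hf * Module.reflection hg) ^ m = 1 := by
  have hm' : (3 : ℝ) ≤ m := by exact_mod_cast hm
  set φ := 2 * π / m with hφ
  have hmφ : m * φ = 2 * π := by rw [hφ]; field_simp
  have hsin : sin φ ≠ 0 := by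
    refine (sin_pos_of_pos_of_lt_pi (by positivity) ?_).ne'
    nlinarith [pi_pos]
  ext z
  rw [Module.reflection_mul_reflection_pow_apply hf hg m z _ h.symm]
  -- Both coefficients are multiples of `S (k - 1)` if `m = 2 * k`, and of `S k + S (k - 1)` if
  -- `m = 2 * k + 1`.
  obtain ⟨k, hk | hk⟩ := m.even_or_odd'
  · have hS : (S ℝ (k - 1)).eval (2 * cos φ) = 0 := by
      refine (mul_eq_zero_iff_right hsin).mp ?_
      rw [S_two_mul_real_cos, ← sin_pi, show (((k : ℤ) - 1 : ℤ) + 1 : ℝ) * φ = π by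
        push_cast [hk] at hmφ ⊢; linarith]
    rw [show ((m : ℤ) - 2) / 2 = k - 1 by lia, show ((m : ℤ) - 1) / 2 = k - 1 by lia, hS]
    simp
  · have hS : (S ℝ k).eval (2 * cos φ) + (S ℝ (k - 1)).eval (2 * cos φ) = 0 := by
      refine (mul_eq_zero_iff_right hsin).mp ?_
      rw [add_mul, S_two_mul_real_cos, S_two_mul_real_cos,
        show ((k : ℤ) + 1 : ℝ) * φ = 2 * π - k * φ by push_cast [hk] at hmφ ⊢; linarith,
        sin_two_pi_sub]
      simp
    rw [show ((m : ℤ) - 2) / 2 = k - 1 by lia, show ((m : ℤ) - 1) / 2 = k by lia,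
      show ((m : ℤ) - 3) / 2 = k - 1 by lia, show (m : ℤ) / 2 = k by lia, hS]
    simp

end Dihedral

section GeometricRepresentation

open CoxeterSystem Polynomial.Chebyshev

variable {ι : Type*}

/-- The matrix of the canonical bilinear form `B` in the basis of simple roots; an entry
`M i j = 0` encodes `mᵢⱼ = ∞`. -/
noncomputable def coxeterForm (M : CoxeterMatrix ι) : Matrix ι ι ℝ :=
  .of fun i j ↦ if M i j = 0 then -1 else -cos (π / M i j)

lemma coxeterForm_apply_of_ne_zero {M : CoxeterMatrix ι} {i j : ι} (h : M i j ≠ 0) :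
    coxeterForm M i j = -cos (π / M i j) := if_neg h

lemma coxeterForm_apply_of_eq_zero {M : CoxeterMatrix ι} {i j : ι} (h : M i j = 0) :
    coxeterForm M i j = -1 := if_pos h

variable (M : CoxeterMatrix ι)

@[simp] lemma coxeterForm_self (i : ι) : coxeterForm M i i = 1 := by
  simp [coxeterForm]

lemma isSymm_coxeterForm : (coxeterForm M).IsSymm := by
  ext i j
  simp [coxeterForm, M.symmetric i j]

/-- The simple root `αᵢ` of the geometric representation. -/
noncomputable abbrev simpleRoot (i : ι) : ι →₀ ℝ := .single i 1

/-- The coroot of `αᵢ`, that is the functional `2 B(αᵢ, ·)`. -/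
noncomputable def simpleCoroot (i : ι) : Module.Dual ℝ (ι →₀ ℝ) :=
  (2 : ℝ) • finsuppBilin (coxeterForm M) (simpleRoot i)

lemma simpleCoroot_apply (i : ι) (x : ι →₀ ℝ) :
    simpleCoroot M i x = 2 * finsuppBilin (coxeterForm M) (simpleRoot i) x := rfl

@[simp] lemma simpleCoroot_simpleRoot (i j : ι) :
    simpleCoroot M i (simpleRoot j) = 2 * coxeterForm M i j := by
  rw [simpleCoroot_apply, finsuppBilin_single]

lemma simpleCoroot_simpleRoot_self (i : ι) : simpleCoroot M i (simpleRoot i) = 2 := by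
  simp

/-- The reflection by which the `i`-th simple generator acts on the geometric representation. -/
noncomputable def simpleReflection (i : ι) : (ι →₀ ℝ) ≃ₗ[ℝ] (ι →₀ ℝ) :=
  Module.reflection (simpleCoroot_simpleRoot_self M i)

lemma simpleReflection_apply (i : ι) (x : ι →₀ ℝ) :
    simpleReflection M i x = x - simpleCoroot M i x • simpleRoot i :=
  Module.reflection_apply ..

lemma simpleReflection_simpleRoot_self (i : ι) :
    simpleReflection M i (simpleRoot i) = -simpleRoot i :=
  Module.reflection_apply_self _

lemma simpleReflection_simpleRoot (i j : ι) :
    simpleReflection M i (simpleRoot j) =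
      simpleRoot j - (2 * coxeterForm M i j) • simpleRoot i := by
  rw [simpleReflection_apply, simpleCoroot_simpleRoot]

lemma finsuppBilin_simpleReflection (i : ι) (x y : ι →₀ ℝ) :
    finsuppBilin (coxeterForm M) (simpleReflection M i x) (simpleReflection M i y) =
      finsuppBilin (coxeterForm M) x y := by
  have hsymm : finsuppBilin (coxeterForm M) x (simpleRoot i) =
      finsuppBilin (coxeterForm M) (simpleRoot i) x :=
    (isSymm_finsuppBilin (isSymm_coxeterForm M)).eq x (simpleRoot i)
  simp only [simpleReflection_apply, simpleCoroot_apply, map_sub, map_smul, LinearMap.sub_apply,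
    LinearMap.smul_apply, smul_eq_mul, finsuppBilin_single, coxeterForm_self, hsymm]
  ring

lemma simpleReflection_mul_simpleReflection_pow (i j : ι) :
    (simpleReflection M i * simpleReflection M j) ^ M i j = 1 := by
  have hsymm : coxeterForm M j i = coxeterForm M i j := (isSymm_coxeterForm M).apply i j
  obtain h0 | h1 | h2 | h3 : M i j = 0 ∨ M i j = 1 ∨ M i j = 2 ∨ 3 ≤ M i j := by lia
  · rw [h0, pow_zero]
  · obtain rfl : i = j := by_contra fun hij ↦ M.off_diagonal i j hij h1
    rw [h1, pow_one]
    exact LinearEquiv.ext (Module.involutive_reflection (simpleCoroot_simpleRoot_self M i))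
  · have hform : coxeterForm M i j = 0 := by simp [coxeterForm, h2]
    rw [h2]
    exact reflection_mul_reflection_sq_eq_one _ _ (by simp [hform]) (by simp [hsymm, hform])
  · refine reflection_mul_reflection_pow_eq_one _ _ h3 ?_
    rw [simpleCoroot_simpleRoot, simpleCoroot_simpleRoot, hsymm,
      coxeterForm_apply_of_ne_zero (by lia), mul_div_assoc, cos_two_mul]
    ring

variable {M} {W : Type*} [Group W] (cs : CoxeterSystem M W)

/-- The geometric representation, in which each simple generator acts by a simple reflection. -/
noncomputable def geometricRep : Representation ℝ W (ι →₀ ℝ) :=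
  LinearEquiv.automorphismGroup.toLinearMapMonoidHom.comp <|
    cs.lift ⟨simpleReflection M, simpleReflection_mul_simpleReflection_pow M⟩

@[simp] lemma geometricRep_simple_apply (i : ι) (x : ι →₀ ℝ) :
    geometricRep cs (cs.simple i) x = simpleReflection M i x :=
  congr($(cs.lift_apply_simple (simpleReflection_mul_simpleReflection_pow M) i) x)

lemma finsuppBilin_geometricRep (w : W) (x y : ι →₀ ℝ) :
    finsuppBilin (coxeterForm M) (geometricRep cs w x) (geometricRep cs w y) =
      finsuppBilin (coxeterForm M) x y := by
  induction w using cs.simple_induction_left with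
  | one => simp
  | mul_simple_left w i ih =>
    simp only [map_mul, Module.End.mul_apply, geometricRep_simple_apply,
      finsuppBilin_simpleReflection, ih]

lemma geometricRep_alternatingWord_simpleRoot (i j : ι) (k : ℕ) :
    geometricRep cs (cs.wordProd (alternatingWord i j k)) (simpleRoot i) =
      if Even k then
        (S ℝ k).eval (-2 * coxeterForm M i j) • simpleRoot i +
          (S ℝ (k - 1)).eval (-2 * coxeterForm M i j) • simpleRoot j
      else
        (S ℝ (k - 1)).eval (-2 * coxeterForm M i j) • simpleRoot i +
          (S ℝ k).eval (-2 * coxeterForm M i j) • simpleRoot j := by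
  have hsymm : coxeterForm M j i = coxeterForm M i j := (isSymm_coxeterForm M).apply i j
  induction k with
  | zero => simp [alternatingWord]
  | succ k ih =>
    rw [alternatingWord_succ', cs.wordProd_cons, map_mul, Module.End.mul_apply, ih]
    push_cast
    rw [add_sub_cancel_right, S_add_one]
    by_cases hk : Even k <;>
      simp only [Nat.even_add_one, hk, if_true, if_false, not_true_eq_false, not_false_eq_true,
        map_add, map_smul, geometricRep_simple_apply, simpleReflection_simpleRoot_self,
        simpleReflection_simpleRoot, hsymm, Polynomial.eval_sub, Polynomial.eval_mul,
        Polynomial.eval_X] <;>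
      module

lemma S_eval_coxeterForm_nonneg {i j : ι} (hij : i ≠ j) {k : ℤ} (hk : 0 ≤ k + 1)
    (hkM : M i j = 0 ∨ k < M i j) : 0 ≤ (S ℝ k).eval (-2 * coxeterForm M i j) := by
  obtain hM | hM := eq_or_ne (M i j) 0
  · rw [coxeterForm_apply_of_eq_zero hM, show (-2 * -1 : ℝ) = 2 by norm_num, S_eval_two]
    exact_mod_cast hk
  · have hM2 : (2 : ℝ) ≤ M i j := by
      have := M.off_diagonal i j hij
      exact_mod_cast (by lia : 2 ≤ M i j)
    have hkM' : (k + 1 : ℝ) ≤ M i j := by exact_mod_cast hkM.resolve_left hM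
    rw [coxeterForm_apply_of_ne_zero hM, show -2 * -cos (π / M i j) = 2 * cos (π / M i j) by ring]
    refine S_eval_two_mul_cos_nonneg (by positivity) ?_ hk ?_
    · exact div_lt_self pi_pos (by linarith)
    · rw [mul_div_assoc', div_le_iff₀ (by positivity), mul_comm]
      gcongr

lemma exists_nonneg_geometricRep_alternatingWord {i j : ι} (hij : i ≠ j) {k : ℕ}
    (hk : M i j = 0 ∨ k < M i j) :
    ∃ a b : ℝ, 0 ≤ a ∧ 0 ≤ b ∧
      geometricRep cs (cs.wordProd (alternatingWord i j k)) (simpleRoot i) =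
        a • simpleRoot i + b • simpleRoot j := by
  have hS : 0 ≤ (S ℝ k).eval (-2 * coxeterForm M i j) :=
    S_eval_coxeterForm_nonneg hij (by lia) (by exact_mod_cast hk)
  have hS' : 0 ≤ (S ℝ (k - 1)).eval (-2 * coxeterForm M i j) :=
    S_eval_coxeterForm_nonneg hij (by lia) (hk.imp_right fun h ↦ by lia)
  rw [geometricRep_alternatingWord_simpleRoot]
  split_ifs
  exacts [⟨_, _, hS, hS', rfl⟩, ⟨_, _, hS', hS, rfl⟩]

lemma geometricRep_simpleRoot_nonneg {w : W} {i : ι} (hw : ¬cs.IsRightDescent w i) :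
    0 ≤ geometricRep cs w (simpleRoot i) := by
  obtain rfl | hw1 := eq_or_ne w 1
  · simp
  obtain ⟨j, hj⟩ := cs.exists_rightDescent_of_ne_one hw1
  have hij : i ≠ j := by rintro rfl; exact hw hj
  obtain ⟨v, k, hv, hlen, hvi, hvj⟩ := exists_eq_mul_alternatingWord cs j hw
  have hk : k ≠ 0 := by
    rintro rfl
    simp only [alternatingWord, cs.wordProd_nil, mul_one] at hv
    exact hvj (hv ▸ hj)
  have hkM : M i j = 0 ∨ k < M i j := or_iff_not_imp_left.mpr
    (lt_of_not_isRightDescent_of_eq_mul_alternatingWord cs hw hv hlen)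
  have hlt : cs.length v < cs.length w := hlen ▸ Nat.lt_add_of_pos_right (Nat.pos_of_ne_zero hk)
  obtain ⟨a, b, ha, hb, hab⟩ := exists_nonneg_geometricRep_alternatingWord cs hij hkM
  have hαi := geometricRep_simpleRoot_nonneg hvi
  have hαj := geometricRep_simpleRoot_nonneg hvj
  rw [hv, map_mul, Module.End.mul_apply, hab, map_add, map_smul, map_smul]
  positivity
termination_by cs.length w
decreasing_by all_goals exact hlt

lemma geometricRep_simpleRoot_nonpos {w : W} {i : ι} (hw : cs.IsRightDescent w i) :
    geometricRep cs w (simpleRoot i) ≤ 0 := by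
  have h := geometricRep_simpleRoot_nonneg cs (cs.isRightDescent_iff_not_isRightDescent_mul.mp hw)
  rwa [map_mul, Module.End.mul_apply, geometricRep_simple_apply, simpleReflection_simpleRoot_self,
    map_neg, neg_nonneg] at h

variable (M) in
/-- The open cone of vectors `x` with `B(αᵢ, x) > 0` for all `i`. It lives in the geometric
representation itself rather than in its dual, where the Tits cone is usually formed. -/
def fundamentalChamber : Set (ι →₀ ℝ) :=
  {x | ∀ i, 0 < finsuppBilin (coxeterForm M) (simpleRoot i) x}

lemma eq_one_of_mem_fundamentalChamber {x : ι →₀ ℝ} {w : W} (hx : x ∈ fundamentalChamber M)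
    (hwx : geometricRep cs w x ∈ fundamentalChamber M) : w = 1 := by
  by_contra hw
  obtain ⟨i, hi⟩ := cs.exists_rightDescent_of_ne_one hw
  have hneg : 0 ≤ finsuppBilin (coxeterForm M) (-geometricRep cs w (simpleRoot i))
      (geometricRep cs w x) :=
    finsuppBilin_nonneg (neg_nonneg.mpr (geometricRep_simpleRoot_nonpos cs hi))
      fun j ↦ (hwx j).le
  rw [map_neg, LinearMap.neg_apply, finsuppBilin_geometricRep] at hneg
  linarith [hx i]

end GeometricRepresentation

section Finiteness

open scoped RealInnerProductSpace

variable {ι W : Type*} [Finite ι] [Group W] {M : CoxeterMatrix ι}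

lemma finite_of_posDef_coxeterForm (cs : CoxeterSystem M W) (hM : (coxeterForm M).PosDef) :
    Finite W := by
  let core := finsuppInnerCore hM
  let _ : NormedAddCommGroup (ι →₀ ℝ) := core.toNormedAddCommGroup
  let _ : InnerProductSpace ℝ (ι →₀ ℝ) := .ofCore core.toCore
  have _ : ProperSpace (ι →₀ ℝ) := FiniteDimensional.proper ℝ _
  have hinner (x y : ι →₀ ℝ) : ⟪x, y⟫ = finsuppBilin (coxeterForm M) x y := rfl
  have hroot (i : ι) : ‖(simpleRoot i : ι →₀ ℝ)‖ = 1 := by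
    rw [← sq_eq_sq₀ (norm_nonneg _) zero_le_one, ← real_inner_self_eq_norm_sq, hinner,
      finsuppBilin_single, coxeterForm_self, one_pow]
  let T (w : W) : (ι →₀ ℝ) →ₗᵢ[ℝ] (ι →₀ ℝ) :=
    (geometricRep cs w).isometryOfInner (finsuppBilin_geometricRep cs w)
  let ℓ : StrongDual ℝ (ι →₀ ℝ) := LinearMap.toContinuousLinearMap (Finsupp.linearCombination ℝ 1)
  obtain ⟨x, hx⟩ : ∃ x : ι →₀ ℝ, ∀ i, ⟪x, simpleRoot i⟫ = 1 :=
    ⟨(InnerProductSpace.toDual ℝ _).symm ℓ, fun i ↦ by simp [ℓ]⟩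
  have hchamber {y : ι →₀ ℝ} (hy : ‖y - x‖ < 1) : y ∈ fundamentalChamber M := fun i ↦ by
    have h := abs_real_inner_le_norm (y - x) (simpleRoot i)
    rw [inner_sub_left, hx, hroot, mul_one] at h
    rw [← hinner, real_inner_comm]
    linarith [neg_le_of_abs_le h]
  have hmove {w : W} (hw : w ≠ 1) : 1 ≤ dist (T w x) x := by
    by_contra! h
    rw [dist_eq_norm] at h
    exact hw (eq_one_of_mem_fundamentalChamber cs (hchamber (by simp)) (hchamber h))
  refine finite_of_isBounded_range_of_pairwise_le_dist (f := fun w ↦ T w x) one_pos ?_ ?_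
  · exact (Metric.isBounded_sphere (x := 0) (r := ‖x‖)).subset (by rintro _ ⟨w, rfl⟩; simp)
  · intro v w hvw
    have hTv : T v (T (v⁻¹ * w) x) = T w x := by
      change geometricRep cs v (geometricRep cs (v⁻¹ * w) x) = geometricRep cs w x
      rw [← Module.End.mul_apply, ← map_mul, mul_inv_cancel_left]
    rw [dist_comm, ← hTv, (T v).dist_map]
    exact hmove (by rwa [Ne, inv_mul_eq_one])

lemma posDef_coxeterForm_of_finite [Finite W] (cs : CoxeterSystem M W) :
    (coxeterForm M).PosDef := by
  have := Fintype.ofFinite ι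
  have := Fintype.ofFinite W
  let L : (ι →₀ ℝ) ≃ₗ[ℝ] EuclideanSpace ℝ ι :=
    (Finsupp.linearEquivFunOnFinite ℝ ℝ ι).trans (WithLp.linearEquiv 2 ℝ (ι → ℝ)).symm
  let J := orbitMap (geometricRep cs) L.toLinearMap
  have hJ : LinearMap.ker J = ⊥ := LinearMap.ker_eq_bot.mpr (orbitMap_injective _ L.injective)
  refine posDef_of_inner_eq_mul_norm_sq (isSymm_coxeterForm M) (u := fun i ↦ J (simpleRoot i))
    (Finsupp.linearIndependent_single_one ℝ ι |>.map' J hJ) fun i j ↦ ?_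
  have hinv (y z : ι →₀ ℝ) :
      ⟪J (simpleReflection M i y), J (simpleReflection M i z)⟫ = ⟪J y, J z⟫ := by
    simpa using inner_orbitMap_map (geometricRep cs) L.toLinearMap (cs.simple i) y z
  have h := two_mul_inner_map_eq_of_reflection_invariant (simpleCoroot_simpleRoot_self M i) J hinv
    (simpleRoot j)
  rw [simpleCoroot_simpleRoot] at h
  linarith

theorem coxeter_form_posDef_iff_finite_general (cs : CoxeterSystem M W) :
    (coxeterForm M).PosDef ↔ Finite W :=
  ⟨finite_of_posDef_coxeterForm cs, fun _ ↦ posDef_coxeterForm_of_finite cs⟩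

end Finiteness

/-- The canonical bilinear form of the geometric representation of a Coxeter
system, given by `B i j = -cos (π / mᵢⱼ)` (and `-1` when `mᵢⱼ = ∞`, encoded as `mᵢⱼ = 0`),
is positive definite if and only if the Coxeter group is finite. -/
theorem coxeter_form_posDef_iff_finite (n : ℕ) (M : CoxeterMatrix (Fin n))
    (B : Matrix (Fin n) (Fin n) ℝ)
    (hB : ∀ i j, B i j = if M i j = 0 then -1 else -Real.cos (π / (M i j : ℝ))) :
    B.PosDef ↔ Finite M.Group := by
  obtain rfl : B = coxeterForm M := Matrix.ext hB
  exact coxeter_form_posDef_iff_finite_general M.toCoxeterSystem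
end

section
/- In a spherical building Δ, all panels contained in a given wall M of an apartment are of the same kind: either all are thick or all are thin. -/
/-!
Measure distances between chambers by galleries, and call a chamber on a panel `p` a projection of
a chamber `x` if it is nearest to `x` among the chambers on `p`. A minimal gallery cannot leave an
apartment `A` and then end at a projection `c` of a chamber of `A`: retracting onto `A`, centred
at the second chamber of `A` on the panel where the gallery leaves, folds the gallery and produces a
chamber on `p` nearer than `c`. Hence the projections of `x` onto `p` lie in every apartment
containing `x` and `p`.

Now let `p` and `q` be panels of the wall of `ρ`, with `p` thick, let `x` be a chamber of `A` on `q`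
and `c` its projection onto `p`. Then `ρ c ≠ c` is a projection of `ρ x` onto `p`. Pick a third
chamber `e` on `p` and an apartment `B` containing `x` and `e`. It contains `c`, hence by thinness
not `ρ c`, hence not `ρ x`. So the second chamber of `B` on `q` is a third chamber on `q`.
-/

/-- A (simplicial) spherical building, encoded as a simplicial complex on a vertex type
together with a system of finite, thin apartments satisfying the building axioms:
(B0) every face lies in a chamber (a face of maximal cardinality `rank`);
(B1) any two faces lie in a common apartment;
(B2) for any two apartments containing faces `s` and `t` there is an isomorphism between
them fixing `s` and `t` (and all their faces) pointwise.
Sphericity is encoded by the finiteness of the apartments (Coxeter complexes of finite,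
i.e. spherical, Coxeter groups). -/
structure SphericalBuilding (V : Type*) where
  faces : Set (Finset V)
  downClosed : ∀ ⦃s⦄, s ∈ faces → ∀ ⦃t : Finset V⦄, t ⊆ s → t ∈ faces
  rank : ℕ
  rank_pos : 0 < rank
  card_le : ∀ s ∈ faces, s.card ≤ rank
  face_in_chamber : ∀ s ∈ faces, ∃ c ∈ faces, s ⊆ c ∧ c.card = rank
  apartments : Set (Set (Finset V))
  apartments_sub : ∀ A ∈ apartments, A ⊆ faces
  apartments_downClosed : ∀ A ∈ apartments, ∀ ⦃s⦄, s ∈ A → ∀ ⦃t : Finset V⦄, t ⊆ s → t ∈ A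
  apartments_finite : ∀ A ∈ apartments, A.Finite
  /-- each apartment is thin: a panel of `A` lies in exactly two chambers of `A` -/
  apartments_thin : ∀ A ∈ apartments, ∀ p ∈ A, p.card = rank - 1 →
    ∃ c d : Finset V, c ∈ A ∧ d ∈ A ∧ c.card = rank ∧ d.card = rank ∧ c ≠ d ∧
      p ⊆ c ∧ p ⊆ d ∧ ∀ e ∈ A, e.card = rank → p ⊆ e → e = c ∨ e = d
  /-- each apartment is gallery connected -/
  apartments_connected : ∀ A ∈ apartments, ∀ c ∈ A, ∀ d ∈ A,
    c.card = rank → d.card = rank →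
    Relation.ReflTransGen (fun a b : Finset V => a ∈ A ∧ b ∈ A ∧ a.card = rank ∧
      b.card = rank ∧ a ≠ b ∧ ∃ p ∈ A, p.card = rank - 1 ∧ p ⊆ a ∧ p ⊆ b) c d
  pair_in_apartment : ∀ s ∈ faces, ∀ t ∈ faces, ∃ A ∈ apartments, s ∈ A ∧ t ∈ A
  compatible : ∀ A ∈ apartments, ∀ B ∈ apartments, ∀ s t : Finset V,
    s ∈ A → s ∈ B → t ∈ A → t ∈ B →
    ∃ φ : Finset V → Finset V, Set.BijOn φ A B ∧
      (∀ u ∈ A, ∀ w ∈ A, (u ⊆ w ↔ φ u ⊆ φ w)) ∧ (∀ u ∈ A, (φ u).card = u.card) ∧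
      (∀ u ∈ A, (u ⊆ s ∨ u ⊆ t) → φ u = u)

namespace SphericalBuilding

variable {V : Type*} [DecidableEq V] (Δ : SphericalBuilding V)

/-- A chamber is a face of maximal cardinality. -/
def IsChamber (c : Finset V) : Prop := c ∈ Δ.faces ∧ c.card = Δ.rank

/-- A panel is a codimension one face of a chamber. -/
def IsPanel (p : Finset V) : Prop := p ∈ Δ.faces ∧ p.card = Δ.rank - 1

/-- A panel is thick if it is contained in at least three chambers. -/
def IsThickPanel (p : Finset V) : Prop := Δ.IsPanel p ∧
  ∃ c₁ c₂ c₃ : Finset V, Δ.IsChamber c₁ ∧ Δ.IsChamber c₂ ∧ Δ.IsChamber c₃ ∧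
    p ⊆ c₁ ∧ p ⊆ c₂ ∧ p ⊆ c₃ ∧ c₁ ≠ c₂ ∧ c₁ ≠ c₃ ∧ c₂ ≠ c₃

/-- A panel is thin if it is contained in exactly two chambers. -/
def IsThinPanel (p : Finset V) : Prop := Δ.IsPanel p ∧
  ∃ c₁ c₂ : Finset V, Δ.IsChamber c₁ ∧ Δ.IsChamber c₂ ∧ p ⊆ c₁ ∧ p ⊆ c₂ ∧ c₁ ≠ c₂ ∧
    ∀ c, Δ.IsChamber c → p ⊆ c → c = c₁ ∨ c = c₂

/-- Two chambers are thin-adjacent if their intersection is a thin panel. -/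
def ThinAdj (c c' : Finset V) : Prop :=
  Δ.IsChamber c ∧ Δ.IsChamber c' ∧ c ≠ c' ∧ Δ.IsThinPanel (c ∩ c')

/-- Thin-equivalence: two chambers are thin-equivalent if they are joined by a thin
gallery, i.e. a gallery whose consecutive chambers are thin-adjacent. -/
def ThinEquiv : Finset V → Finset V → Prop := Relation.ReflTransGen Δ.ThinAdj

/-- Two chambers are adjacent if their intersection is a panel. -/
def Adj (c c' : Finset V) : Prop :=
  Δ.IsChamber c ∧ Δ.IsChamber c' ∧ c ≠ c' ∧ Δ.IsPanel (c ∩ c')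

/-- A gallery is a sequence of chambers in which consecutive chambers are adjacent. -/
def IsGallery (γ : List (Finset V)) : Prop :=
  (∀ c ∈ γ, Δ.IsChamber c) ∧ γ.Chain' Δ.Adj

end SphericalBuilding

section Graph

variable {α β : Type*} {G : SimpleGraph α} {H : SimpleGraph β}

theorem edist_map_le_of_eq_or_adj {f : α → β}
    (hf : ∀ ⦃a b⦄, G.Adj a b → f a = f b ∨ H.Adj (f a) (f b)) (a b : α) :
    H.edist (f a) (f b) ≤ G.edist a b := by
  have edist_le_length : ∀ {a b : α} (w : G.Walk a b), H.edist (f a) (f b) ≤ w.length := by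
    intro a b w
    induction w with
    | nil => simp
    | @cons a c b hac w ih =>
      have hstep : H.edist (f a) (f c) ≤ 1 :=
        SimpleGraph.edist_le_one_iff_adj_or_eq.2 (hf hac).symm
      calc H.edist (f a) (f b) ≤ H.edist (f a) (f c) + H.edist (f c) (f b) :=
            SimpleGraph.edist_triangle
        _ ≤ 1 + w.length := add_le_add hstep ih
        _ = (w.cons hac).length := by simp [add_comm]
  exact le_iInf edist_le_length

theorem exists_boundary_adj_edist {a b : α} (hab : G.Reachable a b) {S : Set α}
    (ha : a ∈ S) (hb : b ∉ S) :
    ∃ u ∈ S, ∃ v ∉ S, G.Adj u v ∧ G.edist a u + 1 + G.edist v b ≤ G.edist a b := by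
  obtain ⟨w, hw⟩ := hab.exists_walk_length_eq_edist
  obtain ⟨d, hd, hu, hv⟩ := w.exists_boundary_dart S ha hb
  obtain ⟨w₁, w₂, rfl⟩ := (SimpleGraph.Walk.isSubwalk_toWalk_adj_iff_mem_darts w).2 hd
  refine ⟨d.fst, hu, d.snd, hv, d.adj, ?_⟩
  calc G.edist a d.fst + 1 + G.edist d.snd b ≤ w₁.length + 1 + w₂.length := by
        gcongr <;> exact SimpleGraph.edist_le _
    _ = G.edist a b := by simp [← hw]

end Graph

namespace SphericalBuilding

section ApartmentIso

variable {V : Type*} {A B C : Set (Finset V)} {φ ψ : Finset V → Finset V}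

/-- Isomorphisms between simplicial complexes such as apartments, as maps on faces. Only the values
of `φ` on `A` matter. -/
structure IsApartmentIso (A B : Set (Finset V)) (φ : Finset V → Finset V) : Prop where
  bijOn : Set.BijOn φ A B
  subset_iff : ∀ u ∈ A, ∀ w ∈ A, (u ⊆ w ↔ φ u ⊆ φ w)
  card_map : ∀ u ∈ A, (φ u).card = u.card

namespace IsApartmentIso

protected theorem id (A : Set (Finset V)) : IsApartmentIso A A id :=
  ⟨Set.bijOn_id A, fun _ _ _ _ => Iff.rfl, fun _ _ => rfl⟩

theorem comp (hψ : IsApartmentIso B C ψ) (hφ : IsApartmentIso A B φ) :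
    IsApartmentIso A C (ψ ∘ φ) where
  bijOn := hψ.bijOn.comp hφ.bijOn
  subset_iff u hu w hw := (hφ.subset_iff u hu w hw).trans
    (hψ.subset_iff _ (hφ.bijOn.mapsTo hu) _ (hφ.bijOn.mapsTo hw))
  card_map u hu := (hψ.card_map _ (hφ.bijOn.mapsTo hu)).trans (hφ.card_map u hu)

theorem symm (hφ : IsApartmentIso A B φ) (hinv : Set.InvOn ψ φ A B) : IsApartmentIso B A ψ := by
  have hψ : Set.BijOn ψ B A := hφ.bijOn.symm hinv.symm
  refine ⟨hψ, fun u hu w hw => ?_, fun u hu => ?_⟩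
  · rw [hφ.subset_iff _ (hψ.mapsTo hu) _ (hψ.mapsTo hw), hinv.2 hu, hinv.2 hw]
  · rw [← hφ.card_map _ (hψ.mapsTo hu), hinv.2 hu]

theorem congr (hφ : IsApartmentIso A B φ) (h : Set.EqOn φ ψ A) : IsApartmentIso A B ψ where
  bijOn := hφ.bijOn.congr h
  subset_iff u hu w hw := by rw [← h hu, ← h hw, hφ.subset_iff u hu w hw]
  card_map u hu := by rw [← h hu, hφ.card_map u hu]

theorem exists_vertex_of_mem_map (hφ : IsApartmentIso A B φ) (hB : IsLowerSet B) {u : Finset V}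
    (hu : u ∈ A) {y : V} (hy : y ∈ φ u) : ∃ w ∈ u, φ {w} = {y} := by
  have hyB : {y} ∈ B := hB (Finset.singleton_subset_iff.2 hy) (hφ.bijOn.mapsTo hu)
  obtain ⟨t, ht, hty⟩ := hφ.bijOn.surjOn hyB
  obtain ⟨w, rfl⟩ : ∃ w, t = {w} := by
    rw [← Finset.card_eq_one, ← hφ.card_map t ht, hty, Finset.card_singleton]
  have hwu : {w} ⊆ u := (hφ.subset_iff _ ht _ hu).2 (by rwa [hty, Finset.singleton_subset_iff])
  exact ⟨w, Finset.singleton_subset_iff.1 hwu, hty⟩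

theorem map_eq_of_eq_on_vertices (hA : IsLowerSet A) (hB : IsLowerSet B)
    (hφ : IsApartmentIso A B φ) (hψ : IsApartmentIso A B ψ) {u : Finset V} (hu : u ∈ A)
    (h : ∀ w ∈ u, φ {w} = ψ {w}) : φ u = ψ u := by
  refine Finset.eq_of_subset_of_card_le (fun y hy => ?_)
    (by rw [hφ.card_map u hu, hψ.card_map u hu])
  obtain ⟨w, hwu, hwy⟩ := hφ.exists_vertex_of_mem_map hB hu hy
  have hw : {w} ⊆ u := Finset.singleton_subset_iff.2 hwu
  rw [← Finset.singleton_subset_iff, ← hwy, h w hwu]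
  exact (hψ.subset_iff _ (hA hw hu) _ hu).1 hw

theorem map_vertex_eq_sdiff [DecidableEq V] (hA : IsLowerSet A) (hφ : IsApartmentIso A B φ)
    {p b : Finset V} (hb : b ∈ A) (hpb : p ⊆ b) (hcard : b.card = p.card + 1) {w : V}
    (hwb : w ∈ b) (hwp : w ∉ p) : φ {w} = φ b \ φ p := by
  have hp : p ∈ A := hA hpb hb
  have hw : {w} ∈ A := hA (Finset.singleton_subset_iff.2 hwb) hb
  have hcard_w : (φ {w}).card = 1 := by rw [hφ.card_map _ hw, Finset.card_singleton]
  obtain ⟨y, hy⟩ := Finset.card_eq_one.1 hcard_w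
  refine Finset.eq_of_subset_of_card_le ?_ ?_
  · have hyb : φ {w} ⊆ φ b := (hφ.subset_iff _ hw b hb).1 (Finset.singleton_subset_iff.2 hwb)
    have hyp : ¬ φ {w} ⊆ φ p := fun h =>
      hwp (Finset.singleton_subset_iff.1 ((hφ.subset_iff _ hw p hp).2 h))
    rw [hy, Finset.singleton_subset_iff] at hyb hyp ⊢
    exact Finset.mem_sdiff.2 ⟨hyb, hyp⟩
  · rw [Finset.card_sdiff_of_subset ((hφ.subset_iff p hp b hb).1 hpb), hφ.card_map b hb,
      hφ.card_map p hp, hcard_w]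
    omega

theorem eq_on_faces_of_eq_on_facet (hA : IsLowerSet A) (hB : IsLowerSet B)
    (hφ : IsApartmentIso A B φ) (hψ : IsApartmentIso A B ψ) {p b : Finset V} (hb : b ∈ A)
    (hpb : p ⊆ b) (hcard : b.card = p.card + 1) (hp : ∀ u ⊆ p, φ u = ψ u) (hφψ : φ b = ψ b) :
    ∀ u ⊆ b, φ u = ψ u := by
  classical
  refine fun u hub => map_eq_of_eq_on_vertices hA hB hφ hψ (hA hub hb) fun w hwu => ?_
  by_cases hwp : w ∈ p
  · exact hp _ (Finset.singleton_subset_iff.2 hwp)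
  · rw [hφ.map_vertex_eq_sdiff hA hb hpb hcard (hub hwu) hwp,
      hψ.map_vertex_eq_sdiff hA hb hpb hcard (hub hwu) hwp, hφψ, hp p subset_rfl]

end IsApartmentIso

end ApartmentIso

variable {V : Type*} {Δ : SphericalBuilding V} {A B C : Set (Finset V)}
  {φ ψ : Finset V → Finset V} {a b c d g p q x y : Finset V}

theorem isLowerSet_of_mem_apartments (hA : A ∈ Δ.apartments) : IsLowerSet A :=
  fun _ _ hts hs => Δ.apartments_downClosed A hA hs hts

theorem exists_apartmentIso (hA : A ∈ Δ.apartments) (hB : B ∈ Δ.apartments) {s t : Finset V}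
    (hsA : s ∈ A) (hsB : s ∈ B) (htA : t ∈ A) (htB : t ∈ B) :
    ∃ φ, IsApartmentIso A B φ ∧ (∀ u ⊆ s, φ u = u) ∧ ∀ u ⊆ t, φ u = u := by
  obtain ⟨φ, hbij, hsub, hcard, hfix⟩ := Δ.compatible A hA B hB s t hsA hsB htA htB
  have hlow := isLowerSet_of_mem_apartments hA
  exact ⟨φ, ⟨hbij, hsub, hcard⟩, fun u hu => hfix u (hlow hu hsA) (.inl hu),
    fun u hu => hfix u (hlow hu htA) (.inr hu)⟩

theorem IsApartmentIso.isChamber_map (hB : B ∈ Δ.apartments) (hφ : IsApartmentIso A B φ)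
    (hcA : c ∈ A) (hc : Δ.IsChamber c) : Δ.IsChamber (φ c) :=
  ⟨Δ.apartments_sub B hB (hφ.bijOn.mapsTo hcA), (hφ.card_map c hcA).trans hc.2⟩

theorem exists_chamber_mem_apartment (hA : A ∈ Δ.apartments) {u : Finset V} (hu : u ∈ A) :
    ∃ c ∈ A, Δ.IsChamber c ∧ u ⊆ c := by
  obtain ⟨c, hc, huc, hcard⟩ := Δ.face_in_chamber u (Δ.apartments_sub A hA hu)
  obtain ⟨B, hB, hcB, -⟩ := Δ.pair_in_apartment c hc c hc
  have huB : u ∈ B := isLowerSet_of_mem_apartments hB huc hcB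
  obtain ⟨φ, hφ, hfix, -⟩ := exists_apartmentIso hB hA huB hu huB hu
  refine ⟨φ c, hφ.bijOn.mapsTo hcB, hφ.isChamber_map hA hcB ⟨hc, hcard⟩, ?_⟩
  have hsub := (hφ.subset_iff u huB c hcB).1 huc
  rwa [hfix u subset_rfl] at hsub

theorem existsUnique_chamber_ne (hA : A ∈ Δ.apartments) (haA : a ∈ A) (ha : Δ.IsChamber a)
    (hpa : p ⊆ a) (hp : p.card = Δ.rank - 1) :
    ∃! b, b ∈ A ∧ Δ.IsChamber b ∧ p ⊆ b ∧ b ≠ a := by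
  obtain ⟨c, d, hcA, hdA, hc, hd, hcd, hpc, hpd, honly⟩ :=
    Δ.apartments_thin A hA p (isLowerSet_of_mem_apartments hA hpa haA) hp
  have hc' : Δ.IsChamber c := ⟨Δ.apartments_sub A hA hcA, hc⟩
  have hd' : Δ.IsChamber d := ⟨Δ.apartments_sub A hA hdA, hd⟩
  rcases honly a haA ha.2 hpa with rfl | rfl
  · exact ⟨d, ⟨hdA, hd', hpd, hcd.symm⟩,
      fun e he => (honly e he.1 he.2.1.2 he.2.2.1).resolve_left he.2.2.2⟩
  · exact ⟨c, ⟨hcA, hc', hpc, hcd⟩,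
      fun e he => (honly e he.1 he.2.1.2 he.2.2.1).resolve_right he.2.2.2⟩

theorem IsApartmentIso.map_eq_of_map_adjacent_eq (hA : A ∈ Δ.apartments) (hB : B ∈ Δ.apartments)
    (hφ : IsApartmentIso A B φ) (hψ : IsApartmentIso A B ψ) (haA : a ∈ A) (ha : Δ.IsChamber a)
    (hbA : b ∈ A) (hb : Δ.IsChamber b) (hab : a ≠ b) (hpa : p ⊆ a) (hpb : p ⊆ b)
    (hp : p.card = Δ.rank - 1) (hφψa : φ a = ψ a) (hφψp : φ p = ψ p) : φ b = ψ b := by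
  have hpA : p ∈ A := isLowerSet_of_mem_apartments hA hpa haA
  have isNeighbor : ∀ {χ : Finset V → Finset V}, IsApartmentIso A B χ →
      χ b ∈ B ∧ Δ.IsChamber (χ b) ∧ χ p ⊆ χ b ∧ χ b ≠ χ a := fun hχ =>
    ⟨hχ.bijOn.mapsTo hbA, hχ.isChamber_map hB hbA hb, (hχ.subset_iff p hpA b hbA).1 hpb,
      fun h => hab (hχ.bijOn.injOn hbA haA h).symm⟩
  refine (existsUnique_chamber_ne hB (hφ.bijOn.mapsTo haA) (hφ.isChamber_map hB haA ha)
    ((hφ.subset_iff p hpA a haA).1 hpa) ((hφ.card_map p hpA).trans hp)).unique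
    (isNeighbor hφ) ?_
  rw [hφψa, hφψp]
  exact isNeighbor hψ

theorem IsApartmentIso.eqOn_of_eq_on_chamber (hA : A ∈ Δ.apartments) (hB : B ∈ Δ.apartments)
    (hφ : IsApartmentIso A B φ) (hψ : IsApartmentIso A B ψ) (hgA : g ∈ A) (hg : Δ.IsChamber g)
    (h : ∀ u ⊆ g, φ u = ψ u) : Set.EqOn φ ψ A := by
  intro u hu
  obtain ⟨c, hcA, hc, huc⟩ := exists_chamber_mem_apartment hA hu
  have hgallery := Δ.apartments_connected A hA g hgA c hcA hg.2 hc.2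
  suffices ∀ u ⊆ c, φ u = ψ u from this u huc
  clear hcA hc huc
  induction hgallery with
  | refl => exact h
  | @tail a b _ hab ih =>
    obtain ⟨haA, hbA, ha, hb, hne, p, -, hp, hpa, hpb⟩ := hab
    have hφψb : φ b = ψ b := map_eq_of_map_adjacent_eq hA hB hφ hψ haA
      ⟨Δ.apartments_sub A hA haA, ha⟩ hbA ⟨Δ.apartments_sub A hA hbA, hb⟩ hne hpa hpb hp
      (ih a subset_rfl) (ih p hpa)
    have hcard : b.card = p.card + 1 := by have := Δ.rank_pos; omega
    exact eq_on_faces_of_eq_on_facet (isLowerSet_of_mem_apartments hA)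
      (isLowerSet_of_mem_apartments hB) hφ hψ hbA hpb hcard (fun u hu => ih u (hu.trans hpa)) hφψb

theorem IsApartmentIso.map_eq_of_eq_on_common_chamber (hA : A ∈ Δ.apartments)
    (hB : B ∈ Δ.apartments) (hC : C ∈ Δ.apartments) (hφ : IsApartmentIso A C φ)
    (hψ : IsApartmentIso B C ψ) (hgA : g ∈ A) (hgB : g ∈ B) (hg : Δ.IsChamber g)
    (h : ∀ w ⊆ g, φ w = ψ w) {u : Finset V} (huA : u ∈ A) (huB : u ∈ B) : φ u = ψ u := by
  obtain ⟨χ, hχ, hχg, hχu⟩ := exists_apartmentIso hA hB hgA hgB huA huB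
  calc φ u = ψ (χ u) := hφ.eqOn_of_eq_on_chamber hA hC (hψ.comp hχ) hgA hg
        (fun w hw => by rw [Function.comp_apply, hχg w hw, h w hw]) huA
    _ = ψ u := by rw [hχu u subset_rfl]

section Retraction

variable {r : Finset V → Finset V}

variable (Δ) in
/-- The retraction of `Δ` onto the apartment `A` centred at the chamber `g`, as a map on faces. -/
structure IsRetraction (A : Set (Finset V)) (g : Finset V) (r : Finset V → Finset V) : Prop where
  isApartmentIso : ∀ B ∈ Δ.apartments, g ∈ B → IsApartmentIso B A r
  map_eq_self : ∀ u ∈ A, r u = u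

theorem exists_isRetraction (hA : A ∈ Δ.apartments) (hgA : g ∈ A) (hg : Δ.IsChamber g) :
    ∃ r, Δ.IsRetraction A g r := by
  have exists_iso : ∀ u ∈ Δ.faces, ∃ B ∈ Δ.apartments, g ∈ B ∧ u ∈ B ∧
      ∃ φ, IsApartmentIso B A φ ∧ ∀ w ⊆ g, φ w = w := by
    intro u hu
    obtain ⟨B, hB, hgB, huB⟩ := Δ.pair_in_apartment g hg.1 u hu
    obtain ⟨φ, hφ, hfix, -⟩ := exists_apartmentIso hB hA hgB hgA hgB hgA
    exact ⟨B, hB, hgB, huB, φ, hφ, hfix⟩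
  choose! B hB hgB huB φ hφ hφg using exists_iso
  have heq : ∀ C ∈ Δ.apartments, g ∈ C → ∀ χ, IsApartmentIso C A χ → (∀ w ⊆ g, χ w = w) →
      ∀ u ∈ C, χ u = φ u u := by
    intro C hC hgC χ hχ hχg u huC
    have hu := Δ.apartments_sub C hC huC
    exact hχ.map_eq_of_eq_on_common_chamber hC (hB u hu) hA (hφ u hu) hgC (hgB u hu) hg
      (fun w hw => (hχg w hw).trans (hφg u hu w hw).symm) huC (huB u hu)
  refine ⟨fun u => φ u u, fun C hC hgC => ?_, fun u hu => ?_⟩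
  · obtain ⟨χ, hχ, hχg, -⟩ := exists_apartmentIso hC hA hgC hgA hgC hgA
    exact hχ.congr (heq C hC hgC χ hχ hχg)
  · exact (heq A hA hgA id (.id A) (fun _ _ => rfl) u hu).symm

namespace IsRetraction

theorem map_mem (hr : Δ.IsRetraction A g r) (hg : Δ.IsChamber g) (hc : Δ.IsChamber c) :
    r c ∈ A := by
  obtain ⟨B, hB, hgB, hcB⟩ := Δ.pair_in_apartment g hg.1 c hc.1
  exact (hr.isApartmentIso B hB hgB).bijOn.mapsTo hcB

theorem isChamber_map (hA : A ∈ Δ.apartments) (hr : Δ.IsRetraction A g r) (hg : Δ.IsChamber g)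
    (hc : Δ.IsChamber c) : Δ.IsChamber (r c) := by
  obtain ⟨B, hB, hgB, hcB⟩ := Δ.pair_in_apartment g hg.1 c hc.1
  exact (hr.isApartmentIso B hB hgB).isChamber_map hA hcB hc

theorem map_subset_map (hr : Δ.IsRetraction A g r) (hg : Δ.IsChamber g) (hc : Δ.IsChamber c)
    (hpc : p ⊆ c) : r p ⊆ r c := by
  obtain ⟨B, hB, hgB, hcB⟩ := Δ.pair_in_apartment g hg.1 c hc.1
  exact ((hr.isApartmentIso B hB hgB).subset_iff p
    (isLowerSet_of_mem_apartments hB hpc hcB) c hcB).1 hpc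

theorem subset_map (hr : Δ.IsRetraction A g r) (hg : Δ.IsChamber g) (hc : Δ.IsChamber c)
    (hpA : p ∈ A) (hpc : p ⊆ c) : p ⊆ r c :=
  hr.map_eq_self p hpA ▸ hr.map_subset_map hg hc hpc

theorem card_map (hr : Δ.IsRetraction A g r) (hg : Δ.IsChamber g) (hp : p ∈ Δ.faces) :
    (r p).card = p.card := by
  obtain ⟨B, hB, hgB, hpB⟩ := Δ.pair_in_apartment g hg.1 p hp
  exact (hr.isApartmentIso B hB hgB).card_map p hpB

theorem map_ne_center (hr : Δ.IsRetraction A g r) (hg : Δ.IsChamber g) (hgA : g ∈ A)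
    (hc : Δ.IsChamber c) (hcg : c ≠ g) : r c ≠ g := by
  obtain ⟨B, hB, hgB, hcB⟩ := Δ.pair_in_apartment g hg.1 c hc.1
  intro h
  exact hcg ((hr.isApartmentIso B hB hgB).bijOn.injOn hcB hgB (h.trans (hr.map_eq_self g hgA).symm))

theorem map_eq_of_subset_center (hr : Δ.IsRetraction A g r) (hA : A ∈ Δ.apartments) (hgA : g ∈ A)
    (hg : Δ.IsChamber g) (hga : g ≠ a) (haA : a ∈ A) (ha : Δ.IsChamber a) (hpa : p ⊆ a)
    (hp : p.card = Δ.rank - 1) (hpg : p ⊆ g) (hbA : b ∉ A) (hb : Δ.IsChamber b) (hpb : p ⊆ b) :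
    r b = a := by
  have hpA : p ∈ A := isLowerSet_of_mem_apartments hA hpa haA
  have hrbg : r b ≠ g := hr.map_ne_center hg hgA hb fun h => hbA (h ▸ hgA)
  exact (existsUnique_chamber_ne hA hgA hg hpg hp).unique
    ⟨hr.map_mem hg hb, hr.isChamber_map hA hg hb, hr.subset_map hg hb hpA hpb, hrbg⟩
    ⟨haA, ha, hpa, hga.symm⟩

end IsRetraction

end Retraction

section Gallery

variable [DecidableEq V] {r : Finset V → Finset V}

theorem adj_of_subset (hc : Δ.IsChamber c) (hd : Δ.IsChamber d) (hcd : c ≠ d) (hpc : p ⊆ c)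
    (hpd : p ⊆ d) (hp : p.card = Δ.rank - 1) : Δ.Adj c d := by
  refine ⟨hc, hd, hcd, Δ.downClosed hc.1 Finset.inter_subset_left, ?_⟩
  have hlower : p.card ≤ (c ∩ d).card := Finset.card_le_card (Finset.subset_inter hpc hpd)
  have hupper : (c ∩ d).card < c.card := by
    refine Finset.card_lt_card (Finset.inter_subset_left.ssubset_of_ne fun h => hcd ?_)
    exact Finset.eq_of_subset_of_card_le (Finset.inter_eq_left.1 h) (hd.2.trans hc.2.symm).le
  have := hc.2
  omega

variable (Δ) in
/-- The chamber graph, whose extended distance is the gallery distance. Finsets that are not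
chambers are isolated vertices. -/
def chamberGraph : SimpleGraph (Finset V) where
  Adj := Δ.Adj
  symm := ⟨fun c d ⟨hc, hd, hcd, hp⟩ => ⟨hd, hc, hcd.symm, by rwa [Finset.inter_comm]⟩⟩
  loopless := ⟨fun _ h => h.2.2.1 rfl⟩

theorem reachable_chamberGraph (hc : Δ.IsChamber c) (hd : Δ.IsChamber d) :
    Δ.chamberGraph.Reachable c d := by
  obtain ⟨A, hA, hcA, hdA⟩ := Δ.pair_in_apartment c hc.1 d hd.1
  rw [SimpleGraph.reachable_iff_reflTransGen]
  refine Relation.ReflTransGen.mono ?_ _ _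
    (Δ.apartments_connected A hA c hcA d hdA hc.2 hd.2)
  rintro a b ⟨haA, hbA, ha, hb, hab, p, -, hp, hpa, hpb⟩
  exact adj_of_subset ⟨Δ.apartments_sub A hA haA, ha⟩ ⟨Δ.apartments_sub A hA hbA, hb⟩
    hab hpa hpb hp

theorem IsApartmentIso.map_adj (hA : A ∈ Δ.apartments) (hB : B ∈ Δ.apartments)
    (hφ : IsApartmentIso A B φ) (haA : a ∈ A) (hbA : b ∈ A) (hab : Δ.Adj a b) :
    Δ.Adj (φ a) (φ b) := by
  obtain ⟨ha, hb, hne, -, hp⟩ := hab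
  have hpA : a ∩ b ∈ A := isLowerSet_of_mem_apartments hA Finset.inter_subset_left haA
  exact adj_of_subset (hφ.isChamber_map hB haA ha) (hφ.isChamber_map hB hbA hb)
    (fun h => hne (hφ.bijOn.injOn haA hbA h))
    ((hφ.subset_iff _ hpA a haA).1 Finset.inter_subset_left)
    ((hφ.subset_iff _ hpA b hbA).1 Finset.inter_subset_right) ((hφ.card_map _ hpA).trans hp)

theorem IsRetraction.map_eq_or_adj (hA : A ∈ Δ.apartments) (hr : Δ.IsRetraction A g r)
    (hg : Δ.IsChamber g) (hab : Δ.Adj a b) : r a = r b ∨ Δ.Adj (r a) (r b) := by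
  obtain ⟨ha, hb, -, hpface, hp⟩ := hab
  refine or_iff_not_imp_left.2 fun hne => ?_
  exact adj_of_subset (hr.isChamber_map hA hg ha) (hr.isChamber_map hA hg hb) hne
    (hr.map_subset_map hg ha Finset.inter_subset_left)
    (hr.map_subset_map hg hb Finset.inter_subset_right) ((hr.card_map hg hpface).trans hp)

theorem IsRetraction.edist_map_le (hA : A ∈ Δ.apartments) (hr : Δ.IsRetraction A g r)
    (hg : Δ.IsChamber g) (a b : Finset V) :
    Δ.chamberGraph.edist (r a) (r b) ≤ Δ.chamberGraph.edist a b :=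
  edist_map_le_of_eq_or_adj (fun _ _ => hr.map_eq_or_adj hA hg) a b

theorem IsApartmentIso.edist_map_le (hA : A ∈ Δ.apartments) (hB : B ∈ Δ.apartments)
    (hφ : IsApartmentIso A B φ) (haA : a ∈ A) (ha : Δ.IsChamber a) (hbA : b ∈ A) :
    Δ.chamberGraph.edist (φ a) (φ b) ≤ Δ.chamberGraph.edist a b := by
  obtain ⟨r, hr⟩ := exists_isRetraction hA haA ha
  have hstep : ∀ ⦃c d⦄, Δ.chamberGraph.Adj c d →
      φ (r c) = φ (r d) ∨ Δ.chamberGraph.Adj (φ (r c)) (φ (r d)) := fun c d hcd =>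
    (hr.map_eq_or_adj hA ha hcd).imp (congrArg φ)
      (hφ.map_adj hA hB (hr.map_mem ha hcd.1) (hr.map_mem ha hcd.2.1))
  simpa only [hr.map_eq_self a haA, hr.map_eq_self b hbA] using edist_map_le_of_eq_or_adj hstep a b

end Gallery

section Projection

variable [DecidableEq V]

variable (Δ) in
/-- `c` is a projection of `x` onto `p`: a chamber nearest to `x` among those containing `p`.
It need not be unique, since apartments are not assumed to be Coxeter complexes. -/
def IsProjection (x p c : Finset V) : Prop :=
  MinimalFor (fun e => Δ.IsChamber e ∧ p ⊆ e) (Δ.chamberGraph.edist x) c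

theorem exists_isProjection (x : Finset V) (hp : p ∈ Δ.faces) : ∃ c, Δ.IsProjection x p c := by
  obtain ⟨c, hc, hpc, hcard⟩ := Δ.face_in_chamber p hp
  exact exists_minimalFor_of_wellFoundedLT _ _ ⟨c, ⟨hc, hcard⟩, hpc⟩

theorem IsProjection.mem_apartment (hc : Δ.IsProjection x p c) (hA : A ∈ Δ.apartments)
    (hxA : x ∈ A) (hx : Δ.IsChamber x) (hpA : p ∈ A) : c ∈ A := by
  obtain ⟨hcC, hpc⟩ := hc.prop
  by_contra hcA
  obtain ⟨u, huA, v, hvA, ⟨hu, hv, -, -, hpanel⟩, hdist⟩ :=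
    exists_boundary_adj_edist (reachable_chamberGraph hx hcC) hxA hcA
  have huv : u ∩ v ⊆ u := Finset.inter_subset_left
  obtain ⟨g, ⟨hgA, hg, hgp, hgu⟩, -⟩ := existsUnique_chamber_ne hA huA hu huv hpanel
  obtain ⟨r, hr⟩ := exists_isRetraction hA hgA hg
  have hrv : r v = u := hr.map_eq_of_subset_center hA hgA hg hgu huA hu huv hpanel hgp hvA hv
    Finset.inter_subset_right
  have hprc : p ⊆ r c := hr.subset_map hg hcC hpA hpc
  have hfold : Δ.chamberGraph.edist u (r c) ≤ Δ.chamberGraph.edist v c := by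
    have := hr.edist_map_le hA hg v c
    rwa [hrv] at this
  have hle : Δ.chamberGraph.edist x c ≤ Δ.chamberGraph.edist x u + Δ.chamberGraph.edist v c :=
    calc Δ.chamberGraph.edist x c ≤ Δ.chamberGraph.edist x (r c) :=
          MinimalFor.le hc ⟨hr.isChamber_map hA hg hcC, hprc⟩
      _ ≤ Δ.chamberGraph.edist x u + Δ.chamberGraph.edist u (r c) := SimpleGraph.edist_triangle
      _ ≤ Δ.chamberGraph.edist x u + Δ.chamberGraph.edist v c := by gcongr
  have hfin : Δ.chamberGraph.edist x u + Δ.chamberGraph.edist v c ≠ ⊤ :=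
    WithTop.add_ne_top.2
      ⟨SimpleGraph.edist_ne_top_iff_reachable.2 (reachable_chamberGraph hx hu),
        SimpleGraph.edist_ne_top_iff_reachable.2 (reachable_chamberGraph hv hcC)⟩
  rw [add_right_comm] at hdist
  exact (ENat.add_one_le_iff hfin).1 (hdist.trans hle) |>.false

theorem IsProjection.map (hc : Δ.IsProjection x p c) (hA : A ∈ Δ.apartments)
    (hB : B ∈ Δ.apartments) (hφ : IsApartmentIso A B φ) (hxA : x ∈ A) (hx : Δ.IsChamber x)
    (hpA : p ∈ A) : Δ.IsProjection (φ x) (φ p) (φ c) := by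
  have hcA : c ∈ A := hc.mem_apartment hA hxA hx hpA
  have hφxB : φ x ∈ B := hφ.bijOn.mapsTo hxA
  have hφpB : φ p ∈ B := hφ.bijOn.mapsTo hpA
  have hφx : Δ.IsChamber (φ x) := hφ.isChamber_map hB hxA hx
  obtain ⟨m, hm⟩ := exists_isProjection (φ x) (Δ.apartments_sub B hB hφpB)
  have hmB : m ∈ B := hm.mem_apartment hB hφxB hφx hφpB
  have hinv := hφ.bijOn.invOn_invFunOn
  set ψ := Function.invFunOn φ A
  have hψ : IsApartmentIso B A ψ := hφ.symm hinv
  have hpψm : p ⊆ ψ m := by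
    have := (hψ.subset_iff _ hφpB m hmB).1 hm.prop.2
    rwa [hinv.1 hpA] at this
  have hle : Δ.chamberGraph.edist (φ x) (φ c) ≤ Δ.chamberGraph.edist (φ x) m :=
    calc Δ.chamberGraph.edist (φ x) (φ c) ≤ Δ.chamberGraph.edist x c :=
          hφ.edist_map_le hA hB hxA hx hcA
      _ ≤ Δ.chamberGraph.edist x (ψ m) := MinimalFor.le hc ⟨hψ.isChamber_map hA hmB hm.prop.1, hpψm⟩
      _ = Δ.chamberGraph.edist (ψ (φ x)) (ψ m) := by rw [hinv.1 hxA]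
      _ ≤ Δ.chamberGraph.edist (φ x) m := hψ.edist_map_le hB hA hφxB hφx hmB
  exact ⟨⟨hφ.isChamber_map hB hcA hc.prop.1, (hφ.subset_iff p hpA c hcA).1 hc.prop.2⟩,
    fun e he _ => hle.trans (MinimalFor.le hm he)⟩

end Projection

theorem IsThickPanel.exists_chamber_ne_ne (hp : Δ.IsThickPanel p) (c d : Finset V) :
    ∃ e, Δ.IsChamber e ∧ p ⊆ e ∧ e ≠ c ∧ e ≠ d := by
  obtain ⟨-, c₁, c₂, c₃, h₁, h₂, h₃, hp₁, hp₂, hp₃, h₁₂, h₁₃, h₂₃⟩ := hp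
  grind

theorem IsPanel.isThinPanel_of_not_isThickPanel (hp : Δ.IsPanel p) (hthick : ¬ Δ.IsThickPanel p) :
    Δ.IsThinPanel p := by
  obtain ⟨A, hA, hpA, -⟩ := Δ.pair_in_apartment p hp.1 p hp.1
  obtain ⟨c, hcA, hc, hpc⟩ := exists_chamber_mem_apartment hA hpA
  obtain ⟨d, ⟨-, hd, hpd, hdc⟩, -⟩ := existsUnique_chamber_ne hA hcA hc hpc hp.2
  refine ⟨hp, c, d, hc, hd, hpc, hpd, hdc.symm, fun e he hpe => ?_⟩
  by_contra! hne
  exact hthick ⟨hp, c, d, e, hc, hd, he, hpc, hpd, hpe, hdc.symm, hne.1.symm, hne.2.symm⟩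

theorem IsThickPanel.of_isProjection_ne [DecidableEq V] (hp : Δ.IsThickPanel p) (hq : Δ.IsPanel q)
    (hx : Δ.IsChamber x) (hy : Δ.IsChamber y) (hqx : q ⊆ x) (hqy : q ⊆ y)
    (hc : Δ.IsProjection x p c) (hd : Δ.IsProjection y p d) (hcd : c ≠ d) :
    Δ.IsThickPanel q := by
  obtain ⟨hcC, hpc⟩ := hc.prop
  obtain ⟨hdC, hpd⟩ := hd.prop
  obtain ⟨e, he, hpe, hec, hed⟩ := hp.exists_chamber_ne_ne c d
  obtain ⟨B, hB, hxB, heB⟩ := Δ.pair_in_apartment x hx.1 e he.1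
  have hpB : p ∈ B := isLowerSet_of_mem_apartments hB hpe heB
  have hcB : c ∈ B := hc.mem_apartment hB hxB hx hpB
  have hdB : d ∉ B := fun hdB => hed <| (existsUnique_chamber_ne hB hcB hcC hpc hp.1.2).unique
    ⟨heB, he, hpe, hec⟩ ⟨hdB, hdC, hpd, hcd.symm⟩
  have hyB : y ∉ B := fun hyB => hdB (hd.mem_apartment hB hyB hy hpB)
  obtain ⟨z, ⟨hzB, hz, hqz, hzx⟩, -⟩ := existsUnique_chamber_ne hB hxB hx hqx hq.2
  exact ⟨hq, x, y, z, hx, hy, hz, hqx, hqy, hqz, fun h => hyB (h ▸ hxB), hzx.symm,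
    fun h => hyB (h ▸ hzB)⟩

theorem IsThickPanel.of_fixed {ρ : Finset V → Finset V} (hp : Δ.IsThickPanel p)
    (hA : A ∈ Δ.apartments) (hρ : IsApartmentIso A A ρ)
    (hno : ∀ c ∈ A, Δ.IsChamber c → ρ c ≠ c) (hpA : p ∈ A) (hρp : ρ p = p)
    (hq : Δ.IsPanel q) (hqA : q ∈ A) (hρq : ρ q = q) : Δ.IsThickPanel q := by
  classical
  obtain ⟨x, hxA, hx, hqx⟩ := exists_chamber_mem_apartment hA hqA
  have hqρx : q ⊆ ρ x := by
    have := (hρ.subset_iff q hqA x hxA).1 hqx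
    rwa [hρq] at this
  obtain ⟨c, hc⟩ := exists_isProjection x (Δ.apartments_sub A hA hpA)
  have hρc : Δ.IsProjection (ρ x) p (ρ c) := by
    have := hc.map hA hA hρ hxA hx hpA
    rwa [hρp] at this
  have hne : ρ c ≠ c := hno c (hc.mem_apartment hA hxA hx hpA) hc.prop.1
  exact hp.of_isProjection_ne hq hx (hρ.isChamber_map hA hxA hx) hqx hqρx hc hρc hne.symm

end SphericalBuilding

theorem wall_panels_all_thick_or_all_thin_general {V : Type*}
    (Δ : SphericalBuilding V) {A : Set (Finset V)} (hA : A ∈ Δ.apartments)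
    {ρ : Finset V → Finset V} (hρ : SphericalBuilding.IsApartmentIso A A ρ)
    (hnofixedchamber : ∀ c ∈ A, c.card = Δ.rank → ρ c ≠ c) :
    (∀ p ∈ {s ∈ A | ρ s = s}, Δ.IsPanel p → Δ.IsThickPanel p) ∨
    (∀ p ∈ {s ∈ A | ρ s = s}, Δ.IsPanel p → Δ.IsThinPanel p) := by
  by_cases h : ∃ p ∈ {s ∈ A | ρ s = s}, Δ.IsThickPanel p
  · obtain ⟨p, ⟨hpA, hρp⟩, hp⟩ := h
    exact .inl fun q ⟨hqA, hρq⟩ hq => hp.of_fixed hA hρ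
      (fun c hcA hc => hnofixedchamber c hcA hc.2) hpA hρp hq hqA hρq
  · exact .inr fun p hpM hp => hp.isThinPanel_of_not_isThickPanel fun hthick => h ⟨p, hpM, hthick⟩

/-- Let `M` be a wall of an apartment `A` of a spherical building, i.e. the
fixed-point complex of a (nontrivial, involutive, chamber-free) reflection `ρ` of the
Coxeter complex `A`.  Then the panels contained in `M` are either all thick or all thin. -/
theorem wall_panels_all_thick_or_all_thin {V : Type*} [DecidableEq V]
    (Δ : SphericalBuilding V) (A : Set (Finset V)) (hA : A ∈ Δ.apartments)
    -- `ρ` is a reflection of the apartment `A`: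
    (ρ : Finset V → Finset V) (hbij : Set.BijOn ρ A A)
    (hord : ∀ u ∈ A, ∀ w ∈ A, (u ⊆ w ↔ ρ u ⊆ ρ w))
    (hcard : ∀ u ∈ A, (ρ u).card = u.card)
    (hinvol : ∀ u ∈ A, ρ (ρ u) = u)
    (hnontrivial : ∃ u ∈ A, ρ u ≠ u)
    (hnofixedchamber : ∀ c ∈ A, c.card = Δ.rank → ρ c ≠ c)
    -- `M` is the wall of `ρ`, the set of faces of `A` fixed by `ρ`:
    (M : Set (Finset V)) (hM : M = {s ∈ A | ρ s = s}) :
    (∀ p ∈ M, Δ.IsPanel p → Δ.IsThickPanel p) ∨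
    (∀ p ∈ M, Δ.IsPanel p → Δ.IsThinPanel p) := by
  subst hM
  exact wall_panels_all_thick_or_all_thin_general Δ hA ⟨hbij, hord, hcard⟩ hnofixedchamber
end
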